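/- Let N ≥ 3 and let φ, f : (0,∞) → [0,∞) be continuous functions with ∫₀¹ r·φ(r) dr < ∞. Suppose u is a twice continuously differentiable, positive and bounded function on a punctured ball B_{r₁}(0) \ {0} ⊂ ℝ^N (for some r₁ > 0) satisfying −Δu(x) = φ(|x|) f(u(x)) for all x with 0 < |x| < r₁. Then there exists L > 0 such that u(x) → L as x → 0. -/

import Mathlib

open Metric Set MeasureTheory Filter

noncomputable def laplacian {N : ℕ} (u : EuclideanSpace ℝ (Fin N) → ℝ)
    (x : EuclideanSpace ℝ (Fin N)) : ℝ :=
  ∑ i, iteratedFDeriv ℝ 2 u x ![EuclideanSpace.single i 1, EuclideanSpace.single i 1]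

/-!
The function `u` is superharmonic near the puncture and bounded, so the maximum principle, with a
multiple of `log ‖x‖` as a barrier at the puncture, bounds it below by its minimum on a sphere.
Hence `f (u x)` stays bounded and `-K * φ ‖x‖ ≤ Δ u ≤ 0` for some constant `K`.

Let `G` solve `G'' + 2 / r * G' = -K * φ` with `G 0 = 0`; integrability of `r * φ r` is what makes
`G` continuous at the origin. As `G` is decreasing, `u - G ‖·‖` is subharmonic in dimension at least
three, so up to a small error `u` is both superharmonic and subharmonic. Doubling the variables
then bounds `u x - u y` by a multiple of
`‖x‖ ^ 2 + ‖y‖ ^ 2 + n / 2 * (4 * ρ * ‖x - y‖ - ‖x - y‖ ^ 2)`: at an interior maximum of the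
difference, moving `x` along `b` and `y` along the reflection of `b` across the hyperplane
orthogonal to `x - y` changes `x - y` only in its own direction, where the penalty is concave.
The bound vanishes as `x, y → 0`, so `u` is Cauchy at the puncture.
-/

open scoped InnerProductSpace Laplacian Topology

section SecondDerivative

theorem iteratedDeriv_two_nonpos_of_isLocalMax {h : ℝ → ℝ} {a : ℝ} (hm : IsLocalMax h a)
    (hc : ContinuousAt h a) : iteratedDeriv 2 h a ≤ 0 := by
  rw [iteratedDeriv_succ, iteratedDeriv_one]
  by_contra! hpos
  have hmin : IsLocalMin h a := isLocalMin_of_deriv_deriv_pos hpos hm.deriv_eq_zero hc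
  have hconst : h =ᶠ[𝓝 a] fun _ => h a := by
    filter_upwards [hm, hmin] with t h₁ h₂ using le_antisymm h₁ h₂
  have hzero : deriv (deriv h) a = 0 := by
    rw [hconst.deriv.deriv_eq]
    simp
  exact hpos.ne' hzero

variable {E : Type*} [NormedAddCommGroup E] [NormedSpace ℝ E]

theorem contDiffAt_comp_add_smul {u : E → ℝ} {x : E} (hu : ContDiffAt ℝ 2 u x) (b : E) :
    ContDiffAt ℝ 2 (fun t : ℝ => u (x + t • b)) 0 :=
  ContDiffAt.comp 0 (by simpa using hu) (by fun_prop)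

theorem iteratedDeriv_two_comp_add_smul {u : E → ℝ} {x : E} (hu : ContDiffAt ℝ 2 u x) (b : E) :
    iteratedDeriv 2 (fun t : ℝ => u (x + t • b)) 0 = iteratedFDeriv ℝ 2 u x ![b, b] := by
  have hline (t : ℝ) : HasDerivAt (fun t : ℝ => x + t • b) b t := by
    simpa using ((hasDerivAt_id t).smul_const b).const_add x
  have hderiv : deriv (fun t : ℝ => x + t • b) = fun _ => b := funext fun t => (hline t).deriv
  have hderiv₂ : iteratedDeriv 2 (fun t : ℝ => x + t • b) 0 = 0 := by
    rw [iteratedDeriv_succ, iteratedDeriv_one, hderiv, deriv_const]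
  have h := iteratedDeriv_vcomp_two (x := (0 : ℝ)) (f := fun t : ℝ => x + t • b) (g := u)
    (by simpa using hu) (by fun_prop)
  have hb : (fun _ : Fin 2 => b) = ![b, b] := by ext i; fin_cases i <;> rfl
  simpa only [Function.comp_def, hderiv, hderiv₂, hb, zero_smul, add_zero, map_zero] using h

theorem iteratedFDeriv_add_le_of_isLocalMax {V W Ψ : E → ℝ} {x y : E} (hV : ContDiffAt ℝ 2 V x)
    (hW : ContDiffAt ℝ 2 W y) (hΨ : ContDiffAt ℝ 2 Ψ (x - y))
    (hm : IsLocalMax (fun z : E × E => V z.1 + W z.2 - Ψ (z.1 - z.2)) (x, y)) (b c : E) :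
    iteratedFDeriv ℝ 2 V x ![b, b] + iteratedFDeriv ℝ 2 W y ![c, c] ≤
      iteratedFDeriv ℝ 2 Ψ (x - y) ![b - c, b - c] := by
  have hsub (t : ℝ) : x + t • b - (y + t • c) = x - y + t • (b - c) := by module
  have hmax : IsLocalMax
      (fun t : ℝ => V (x + t • b) + W (y + t • c) - Ψ (x - y + t • (b - c))) 0 := by
    have hline : Tendsto (fun t : ℝ => (x + t • b, y + t • c)) (𝓝 0) (𝓝 (x, y)) :=
      Continuous.tendsto' (by fun_prop) _ _ (by simp)
    filter_upwards [hline.eventually hm] with t ht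
    simpa [hsub] using ht
  have hVt := contDiffAt_comp_add_smul hV b
  have hWt := contDiffAt_comp_add_smul hW c
  have hΨt := contDiffAt_comp_add_smul hΨ (b - c)
  have h := iteratedDeriv_two_nonpos_of_isLocalMax hmax ((hVt.add hWt).sub hΨt).continuousAt
  rw [iteratedDeriv_fun_sub (hVt.add hWt) hΨt, iteratedDeriv_fun_add hVt hWt,
    iteratedDeriv_two_comp_add_smul hV, iteratedDeriv_two_comp_add_smul hW,
    iteratedDeriv_two_comp_add_smul hΨ] at h
  linarith

theorem iteratedFDeriv_two_comp {g : ℝ → ℝ} {w : E → ℝ} {x : E} (hg : ContDiffAt ℝ 2 g (w x))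
    (hw : ContDiffAt ℝ 2 w x) (b : E) :
    iteratedFDeriv ℝ 2 (fun y => g (w y)) x ![b, b] =
      iteratedDeriv 2 g (w x) * fderiv ℝ w x b ^ 2 +
        deriv g (w x) * iteratedFDeriv ℝ 2 w x ![b, b] := by
  have hderiv : deriv (fun t : ℝ => w (x + t • b)) 0 = fderiv ℝ w x b :=
    (hw.differentiableAt two_ne_zero).lineDeriv_eq_fderiv
  rw [← iteratedDeriv_two_comp_add_smul (u := fun y => g (w y)) (hg.comp x hw),
    ← iteratedDeriv_two_comp_add_smul hw, ← hderiv]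
  simpa [Function.comp_def] using
    iteratedDeriv_comp_two (g := g) (f := fun t : ℝ => w (x + t • b)) (x := (0 : ℝ))
      (by simpa using hg) (contDiffAt_comp_add_smul hw b)

theorem iteratedFDeriv_comp_norm_self {F : Type*} [NormedAddCommGroup F] [InnerProductSpace ℝ F]
    {G : ℝ → ℝ} {z : F} (hz : z ≠ 0) (hG : ContDiffAt ℝ 2 G ‖z‖) :
    iteratedFDeriv ℝ 2 (fun y : F => G ‖y‖) z ![z, z] = ‖z‖ ^ 2 * iteratedDeriv 2 G ‖z‖ := by
  have hnorm : ContDiffAt ℝ 2 (fun y : F => ‖y‖) z := contDiffAt_norm ℝ hz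
  have hline : (fun t : ℝ => ‖z + t • z‖) =ᶠ[𝓝 0] fun t => (1 + t) * ‖z‖ := by
    filter_upwards [eventually_gt_nhds (show (-1 : ℝ) < 0 by norm_num)] with t ht
    rw [show z + t • z = (1 + t) • z by module, norm_smul, Real.norm_of_nonneg (by linarith)]
  have hflat : iteratedFDeriv ℝ 2 (fun y : F => ‖y‖) z ![z, z] = 0 := by
    rw [← iteratedDeriv_two_comp_add_smul hnorm, hline.iteratedDeriv_eq]
    simp [iteratedDeriv_succ]
  rw [iteratedFDeriv_two_comp hG hnorm, hflat,
    DifferentiableAt.fderiv_norm_self (hnorm.differentiableAt two_ne_zero)]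
  ring

end SecondDerivative

section Laplacian
variable {E : Type*} [NormedAddCommGroup E] [InnerProductSpace ℝ E] [FiniteDimensional ℝ E]

theorem laplacian_nonpos_of_isLocalMax {u : E → ℝ} {x : E} (hm : IsLocalMax u x)
    (hu : ContDiffAt ℝ 2 u x) : Δ u x ≤ 0 := by
  rw [InnerProductSpace.laplacian_eq_iteratedFDeriv_stdOrthonormalBasis]
  refine Finset.sum_nonpos fun i _ => ?_
  rw [← iteratedDeriv_two_comp_add_smul hu]
  have hline : ContinuousAt (fun t : ℝ => x + t • stdOrthonormalBasis ℝ E i) 0 := by fun_prop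
  refine iteratedDeriv_two_nonpos_of_isLocalMax ?_ ?_
  · exact hline.eventually (by simpa [IsLocalMax, IsMaxFilter] using hm) |>.mono (by simp)
  · exact ContinuousAt.comp (by simpa using hu.continuousAt) hline

theorem laplacian_add_const_mul {u w : E → ℝ} {x : E} (hu : ContDiffAt ℝ 2 u x)
    (hw : ContDiffAt ℝ 2 w x) (c : ℝ) :
    Δ (fun y => u y + c * w y) x = Δ u x + c * Δ w x := by
  have hsmul : Δ (c • w) x = c * Δ w x := InnerProductSpace.laplacian_smul c hw
  rw [← hsmul]
  exact hu.laplacian_add (hw.const_smul c)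

theorem laplacian_comp {g : ℝ → ℝ} {w : E → ℝ} {x : E} (hg : ContDiffAt ℝ 2 g (w x))
    (hw : ContDiffAt ℝ 2 w x) :
    Δ (fun y => g (w y)) x =
      iteratedDeriv 2 g (w x) * ‖fderiv ℝ w x‖ ^ 2 + deriv g (w x) * Δ w x := by
  simp only [InnerProductSpace.laplacian_eq_iteratedFDeriv_stdOrthonormalBasis,
    iteratedFDeriv_two_comp hg hw, Finset.sum_add_distrib, ← Finset.mul_sum]
  rw [(stdOrthonormalBasis ℝ E).norm_dual]

theorem laplacian_norm_sq (x : E) : Δ (fun y : E => ‖y‖ ^ 2) x = 2 * Module.finrank ℝ E := by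
  have hline (b : E) : iteratedFDeriv ℝ 2 (fun y : E => ‖y‖ ^ 2) x ![b, b] = 2 * ‖b‖ ^ 2 := by
    have hderiv : deriv (fun t : ℝ => ‖x + t • b‖ ^ 2) =
        fun t => 2 * ⟪x, b⟫_ℝ + 2 * ‖b‖ ^ 2 * t := by
      funext t
      have hline : HasDerivAt (fun t : ℝ => x + t • b) b t := by
        simpa using ((hasDerivAt_id t).smul_const b).const_add x
      rw [hline.norm_sq.deriv, inner_add_left, real_inner_smul_left, real_inner_self_eq_norm_sq]
      ring
    rw [← iteratedDeriv_two_comp_add_smul (contDiff_norm_sq ℝ).contDiffAt, iteratedDeriv_succ,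
      iteratedDeriv_one, hderiv]
    simp
  simp [InnerProductSpace.laplacian_eq_iteratedFDeriv_stdOrthonormalBasis, hline, mul_comm]

theorem laplacian_norm {x : E} (hx : x ≠ 0) :
    Δ (fun y : E => ‖y‖) x = (Module.finrank ℝ E - 1) / ‖x‖ := by
  have : Nontrivial E := ⟨x, 0, hx⟩
  have hnorm : ContDiffAt ℝ 2 (fun y : E => ‖y‖) x := contDiffAt_norm ℝ hx
  have hchain := laplacian_comp (g := fun s => s ^ 2) (by fun_prop) hnorm
  have hsq : iteratedDeriv 2 (fun s : ℝ => s ^ 2) ‖x‖ = 2 := by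
    simp
  rw [laplacian_norm_sq, norm_fderiv_norm (hnorm.differentiableAt two_ne_zero), hsq] at hchain
  have : deriv (fun s : ℝ => s ^ 2) ‖x‖ = 2 * ‖x‖ := by simp
  rw [this] at hchain
  rw [eq_div_iff (norm_ne_zero_iff.mpr hx)]
  linarith

theorem laplacian_comp_norm {G : ℝ → ℝ} {x : E} (hx : x ≠ 0) (hG : ContDiffAt ℝ 2 G ‖x‖) :
    Δ (fun y : E => G ‖y‖) x =
      iteratedDeriv 2 G ‖x‖ + (Module.finrank ℝ E - 1) / ‖x‖ * deriv G ‖x‖ := by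
  have : Nontrivial E := ⟨x, 0, hx⟩
  have hnorm : ContDiffAt ℝ 2 (fun y : E => ‖y‖) x := contDiffAt_norm ℝ hx
  rw [laplacian_comp hG hnorm, norm_fderiv_norm (hnorm.differentiableAt two_ne_zero),
    laplacian_norm hx]
  ring

theorem laplacian_add_laplacian_le_of_isLocalMax {V W Ψ : E → ℝ} {x y : E}
    (hV : ContDiffAt ℝ 2 V x) (hW : ContDiffAt ℝ 2 W y) (hΨ : ContDiffAt ℝ 2 Ψ (x - y))
    (hm : IsLocalMax (fun z : E × E => V z.1 + W z.2 - Ψ (z.1 - z.2)) (x, y)) (hxy : x ≠ y) :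
    Δ V x + Δ W y ≤ 4 / ‖x - y‖ ^ 2 * iteratedFDeriv ℝ 2 Ψ (x - y) ![x - y, x - y] := by
  -- Sum the second variations along the pairs `(b i, R (b i))`, with `R` the reflection across
  -- the hyperplane orthogonal to `x - y`: then `b i - R (b i)` is parallel to `x - y`.
  let b := stdOrthonormalBasis ℝ E
  let R := (ℝ ∙ (x - y))ᗮ.reflection
  let κ i := 2 * ⟪x - y, b i⟫_ℝ / ‖x - y‖ ^ 2
  have hreflect i : b i - R (b i) = κ i • (x - y) := by
    simp only [R, κ, Submodule.reflection_orthogonal_apply, Submodule.reflection_singleton_apply,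
      RCLike.ofReal_real_eq_id, id_eq]
    module
  have hκ : ∑ i, κ i ^ 2 = 4 / ‖x - y‖ ^ 2 := by
    have hd : ‖x - y‖ ≠ 0 := norm_ne_zero_iff.mpr (sub_ne_zero.mpr hxy)
    simp only [κ, div_pow, mul_pow, ← Finset.sum_div, ← Finset.mul_sum, b.sum_sq_inner_left]
    field_simp
    norm_num
  have hhom i : iteratedFDeriv ℝ 2 Ψ (x - y) ![κ i • (x - y), κ i • (x - y)] =
      κ i ^ 2 * iteratedFDeriv ℝ 2 Ψ (x - y) ![x - y, x - y] := by
    simp [iteratedFDeriv_two_apply, sq, mul_assoc]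
  rw [InnerProductSpace.laplacian_eq_iteratedFDeriv_orthonormalBasis V b,
    InnerProductSpace.laplacian_eq_iteratedFDeriv_orthonormalBasis W (b.map R),
    ← Finset.sum_add_distrib, ← hκ, Finset.sum_mul]
  refine Finset.sum_le_sum fun i _ => ?_
  rw [← hhom, ← hreflect]
  exact iteratedFDeriv_add_le_of_isLocalMax hV hW hΨ hm _ _

theorem laplacian_add_laplacian_le_of_isLocalMax_radial {V W : E → ℝ} {ψ : ℝ → ℝ} {x y : E}
    (hV : ContDiffAt ℝ 2 V x) (hW : ContDiffAt ℝ 2 W y) (hψ : ContDiffAt ℝ 2 ψ ‖x - y‖)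
    (hm : IsLocalMax (fun z : E × E => V z.1 + W z.2 - ψ ‖z.1 - z.2‖) (x, y)) (hxy : x ≠ y) :
    Δ V x + Δ W y ≤ 4 * iteratedDeriv 2 ψ ‖x - y‖ := by
  have hz : x - y ≠ 0 := sub_ne_zero.mpr hxy
  have hd : ‖x - y‖ ≠ 0 := norm_ne_zero_iff.mpr hz
  calc Δ V x + Δ W y
      ≤ 4 / ‖x - y‖ ^ 2 * iteratedFDeriv ℝ 2 (fun z : E => ψ ‖z‖) (x - y) ![x - y, x - y] :=
        laplacian_add_laplacian_le_of_isLocalMax hV hW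
          (ContDiffAt.comp (x - y) hψ (contDiffAt_norm ℝ hz)) hm hxy
    _ = 4 * iteratedDeriv 2 ψ ‖x - y‖ := by
        rw [iteratedFDeriv_comp_norm_self hz hψ]
        field_simp

end Laplacian

section MaximumPrinciple

/-- The penalization `Γ` tends to `-∞` at the ends of the noncompact set `D`, which forces
`Φ + ε * Γ` to attain its maximum if it is positive somewhere. -/
theorem nonpos_of_penalized_isMaxOn {X : Type*} [TopologicalSpace X] {D : Set X} {Φ Γ : X → ℝ}
    {C : ℝ} (hΦ : ContinuousOn Φ D) (hΓ : ContinuousOn Γ D) (hC : ∀ p ∈ D, Φ p ≤ C)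
    (hproper : ∀ c, ∃ K ⊆ D, IsCompact K ∧ ∀ p ∈ D \ K, Γ p ≤ c)
    (hmax : ∀ ε > 0, ∀ p ∈ D, IsMaxOn (fun q => Φ q + ε * Γ q) D p → Φ p + ε * Γ p ≤ 0) :
    ∀ p ∈ D, Φ p ≤ 0 := by
  intro p hp
  have hpen : ∀ ε > 0, Φ p + ε * Γ p ≤ 0 := by
    intro ε hε
    by_contra! hpos
    obtain ⟨K, hKD, hK, hKc⟩ := hproper (-C / ε)
    have houtside : ∀ q ∈ D \ K, Φ q + ε * Γ q ≤ 0 := by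
      intro q hq
      have := mul_le_mul_of_nonneg_left (hKc q hq) hε.le
      rw [mul_div_cancel₀ _ hε.ne'] at this
      linarith [hC q hq.1]
    have hpK : p ∈ K := by
      by_contra hpK
      exact hpos.not_ge (houtside p ⟨hp, hpK⟩)
    obtain ⟨q, hqK, hq⟩ := hK.exists_isMaxOn ⟨p, hpK⟩
      ((hΦ.add (hΓ.const_mul ε)).mono hKD)
    have hq_pos : 0 < Φ q + ε * Γ q := hpos.trans_le (hq hpK)
    refine hq_pos.not_ge (hmax ε hε q (hKD hqK) fun z hz => ?_)
    by_cases hzK : z ∈ K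
    · exact hq hzK
    · exact (houtside z ⟨hz, hzK⟩).trans hq_pos.le
  have hlim : Tendsto (fun ε => Φ p + ε * Γ p) (𝓝[>] 0) (𝓝 (Φ p)) :=
    (Continuous.tendsto' (by fun_prop) 0 _ (by simp)).mono_left nhdsWithin_le_nhds
  exact le_of_tendsto hlim (eventually_mem_nhdsWithin.mono hpen)

variable {E : Type*} [NormedAddCommGroup E]

/-- The logarithmic barrier: it vanishes on the sphere of radius `ρ`, tends to `-∞` at the origin
and is strictly subharmonic off the origin in dimension at least three. -/
noncomputable def logBarrier (ρ : ℝ) (x : E) : ℝ := Real.log ‖x‖ - Real.log ρ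

theorem logBarrier_nonpos {ρ : ℝ} {x : E} (hx : x ∈ closedBall 0 ρ \ {0}) :
    logBarrier ρ x ≤ 0 :=
  sub_nonpos.mpr (Real.log_le_log (norm_pos_iff.mpr hx.2) (by simpa using hx.1))

theorem logBarrier_le_of_norm_le {ρ c : ℝ} (hρ : 0 < ρ) {x : E} (hx : x ≠ 0)
    (h : ‖x‖ ≤ ρ * Real.exp c) : logBarrier ρ x ≤ c := by
  have := Real.log_le_log (norm_pos_iff.mpr hx) h
  rw [Real.log_mul hρ.ne' (Real.exp_ne_zero c), Real.log_exp] at this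
  rw [logBarrier]
  linarith

theorem closedBall_sdiff_singleton_mem_nhds {ρ : ℝ} {x : E} (hx : x ≠ 0) (hxρ : ‖x‖ < ρ) :
    closedBall (0 : E) ρ \ {0} ∈ 𝓝 x :=
  inter_mem (closedBall_mem_nhds_of_mem (by simpa using hxρ))
    (isOpen_compl_singleton.mem_nhds hx)

variable [InnerProductSpace ℝ E]

theorem contDiffAt_logBarrier (ρ : ℝ) {x : E} (hx : x ≠ 0) : ContDiffAt ℝ 2 (logBarrier ρ) x :=
  ((contDiffAt_norm ℝ hx).log (norm_ne_zero_iff.mpr hx)).sub contDiffAt_const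

theorem continuousOn_logBarrier (ρ : ℝ) :
    ContinuousOn (logBarrier ρ) (closedBall (0 : E) ρ \ {0}) :=
  fun _ hx => (contDiffAt_logBarrier ρ hx.2).continuousAt.continuousWithinAt

/-- The penalty of the doubling-of-variables argument on a ball of radius `ρ`. Both squared norms
contribute `2 * finrank ℝ E` to the Laplacian; the concave last term vanishes on the diagonal, and
its coefficient makes the second variation along reflected directions cancel both. -/
noncomputable def doublingPenalty (ρ : ℝ) (x y : E) : ℝ :=
  ‖x‖ ^ 2 + ‖y‖ ^ 2 + Module.finrank ℝ E / 2 * (4 * ρ * ‖x - y‖ - ‖x - y‖ ^ 2)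

theorem le_doublingPenalty {ρ : ℝ} {x y : E} (hx : x ∈ closedBall 0 ρ) (hy : y ∈ closedBall 0 ρ) :
    ‖x‖ ^ 2 + ‖y‖ ^ 2 ≤ doublingPenalty ρ x y := by
  rw [mem_closedBall_zero_iff] at hx hy
  have hd : ‖x - y‖ ≤ 4 * ρ := by linarith [norm_sub_le x y, norm_nonneg x]
  have : 0 ≤ ‖x - y‖ * (4 * ρ - ‖x - y‖) := mul_nonneg (norm_nonneg _) (sub_nonneg.mpr hd)
  have := mul_nonneg (Nat.cast_nonneg (α := ℝ) (Module.finrank ℝ E)) this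
  rw [doublingPenalty]
  linarith

theorem le_mul_doublingPenalty {ρ M : ℝ} (hρ : 0 < ρ) (hM : 0 ≤ M) {x y : E}
    (hx : x ∈ closedBall 0 ρ) (hy : y ∈ closedBall 0 ρ) (h : ‖x‖ = ρ ∨ ‖y‖ = ρ) :
    M ≤ M / ρ ^ 2 * doublingPenalty ρ x y := by
  have hsq : ρ ^ 2 ≤ ‖x‖ ^ 2 + ‖y‖ ^ 2 := by
    rcases h with h | h <;> rw [h] <;> nlinarith [sq_nonneg ‖x‖, sq_nonneg ‖y‖]
  calc M = M / ρ ^ 2 * ρ ^ 2 := by field_simp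
    _ ≤ M / ρ ^ 2 * doublingPenalty ρ x y := by
        gcongr
        exact hsq.trans (le_doublingPenalty hx hy)

theorem continuous_doublingPenalty (ρ : ℝ) :
    Continuous fun z : E × E => doublingPenalty ρ z.1 z.2 := by
  unfold doublingPenalty
  fun_prop

theorem tendsto_doublingPenalty (ρ : ℝ) :
    Tendsto (fun z : E × E => doublingPenalty ρ z.1 z.2) ((𝓝[≠] 0) ×ˢ (𝓝[≠] 0)) (𝓝 0) := by
  have h := (continuous_doublingPenalty (E := E) ρ).tendsto' (0, 0) 0 (by simp [doublingPenalty])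
  rw [nhds_prod_eq] at h
  exact h.mono_left (Filter.prod_mono nhdsWithin_le_nhds nhdsWithin_le_nhds)

variable [FiniteDimensional ℝ E]

theorem laplacian_logBarrier (ρ : ℝ) {x : E} (hx : x ≠ 0) :
    Δ (logBarrier ρ : E → ℝ) x = (Module.finrank ℝ E - 2) / ‖x‖ ^ 2 := by
  have hr : ‖x‖ ≠ 0 := norm_ne_zero_iff.mpr hx
  have hderiv : deriv (fun s => Real.log s - Real.log ρ) = fun s => s⁻¹ := by
    funext s
    simp
  have hG : ContDiffAt ℝ 2 (fun s => Real.log s - Real.log ρ) ‖x‖ :=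
    (Real.contDiffAt_log.mpr hr).sub contDiffAt_const
  rw [show logBarrier ρ = fun y : E => Real.log ‖y‖ - Real.log ρ from rfl,
    laplacian_comp_norm hx hG, iteratedDeriv_succ, iteratedDeriv_one, hderiv, deriv_inv]
  field_simp
  ring

theorem exists_isCompact_logBarrier_le {ρ : ℝ} (hρ : 0 < ρ) (c : ℝ) :
    ∃ K ⊆ closedBall (0 : E) ρ \ {0}, IsCompact K ∧
      ∀ x ∈ (closedBall (0 : E) ρ \ {0}) \ K, logBarrier ρ x ≤ c := by
  have hr : 0 < ρ * Real.exp c := by positivity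
  refine ⟨closedBall 0 ρ \ ball 0 (ρ * Real.exp c),
    sdiff_subset_sdiff_right (by simpa using hr),
    (isCompact_closedBall 0 ρ).diff isOpen_ball, fun x hx => ?_⟩
  refine logBarrier_le_of_norm_le hρ hx.1.2 ?_
  by_contra! hlt
  exact hx.2 ⟨hx.1.1, by simpa using hlt.le⟩

/-- Classical subharmonicity near each point of `s`, for twice continuously differentiable
functions: the one-sided counterpart of `InnerProductSpace.HarmonicOnNhd`. -/
def SubharmonicOnNhd (v : E → ℝ) (s : Set E) : Prop :=
  ∀ x ∈ s, ContDiffAt ℝ 2 v x ∧ 0 ≤ Δ v x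

theorem SubharmonicOnNhd.continuousOn {v : E → ℝ} {s : Set E} (hv : SubharmonicOnNhd v s) :
    ContinuousOn v s :=
  fun x hx => (hv x hx).1.continuousAt.continuousWithinAt

theorem SubharmonicOnNhd.laplacian_add_logBarrier_pos (hdim : 3 ≤ Module.finrank ℝ E) {v : E → ℝ}
    {s : Set E} (hv : SubharmonicOnNhd v s) {x : E} (hxs : x ∈ s) (hx : x ≠ 0) (ρ : ℝ) {ε : ℝ}
    (hε : 0 < ε) :
    ContDiffAt ℝ 2 (fun y => v y + ε * logBarrier ρ y) x ∧
      0 < Δ (fun y => v y + ε * logBarrier ρ y) x := by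
  obtain ⟨hv, hΔ⟩ := hv x hxs
  have hΓ := contDiffAt_logBarrier ρ hx
  have hdim' : (3 : ℝ) ≤ Module.finrank ℝ E := by exact_mod_cast hdim
  refine ⟨hv.add (contDiffAt_const.mul hΓ), ?_⟩
  rw [laplacian_add_const_mul hv hΓ, laplacian_logBarrier ρ hx]
  exact add_pos_of_nonneg_of_pos hΔ
    (mul_pos hε (div_pos (by linarith) (pow_pos (norm_pos_iff.mpr hx) 2)))

theorem SubharmonicOnNhd.le_of_le_on_sphere (hdim : 3 ≤ Module.finrank ℝ E) {ρ : ℝ}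
    (hρ : 0 < ρ) {v : E → ℝ} (hv : SubharmonicOnNhd v (closedBall 0 ρ \ {0})) {C c : ℝ}
    (hC : ∀ x ∈ closedBall 0 ρ \ {0}, v x ≤ C) (hc : ∀ x ∈ sphere 0 ρ, v x ≤ c) :
    ∀ x ∈ closedBall 0 ρ \ {0}, v x ≤ c := by
  suffices ∀ x ∈ closedBall 0 ρ \ {0}, v x - c ≤ 0 from fun x hx => sub_nonpos.mp (this x hx)
  refine nonpos_of_penalized_isMaxOn (hv.continuousOn.sub continuousOn_const)
    (continuousOn_logBarrier ρ) (C := C - c) (fun x hx => sub_le_sub_right (hC x hx) c)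
    (exists_isCompact_logBarrier_le hρ) fun ε hε p hp hmax => ?_
  rcases (mem_closedBall_zero_iff.mp hp.1).eq_or_lt with hpρ | hpρ
  · have := mul_nonpos_of_nonneg_of_nonpos hε.le (logBarrier_nonpos hp)
    linarith [hc p (by simpa using hpρ)]
  · have hlocal : IsLocalMax (fun x => v x + ε * logBarrier ρ x) p := by
      filter_upwards [closedBall_sdiff_singleton_mem_nhds hp.2 hpρ] with x hx
      have : v x - c + ε * logBarrier ρ x ≤ v p - c + ε * logBarrier ρ p := hmax hx
      linarith
    obtain ⟨hC2, hpos⟩ := hv.laplacian_add_logBarrier_pos hdim hp hp.2 ρ hε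
    exact absurd (laplacian_nonpos_of_isLocalMax hlocal hC2) hpos.not_ge

theorem not_isLocalMax_sub_doublingPenalty {ρ m : ℝ} {V W : E → ℝ} {x y : E}
    (hV : ContDiffAt ℝ 2 V x) (hW : ContDiffAt ℝ 2 W y) (hΔV : 0 < Δ V x) (hΔW : 0 < Δ W y)
    (hxy : x ≠ y) :
    ¬ IsLocalMax (fun z : E × E => V z.1 + W z.2 - m * doublingPenalty ρ z.1 z.2) (x, y) := by
  intro hmax
  let n : ℝ := (Module.finrank ℝ E : ℝ)
  let ψ : ℝ → ℝ := fun s => m * (n / 2) * (4 * ρ * s - s ^ 2)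
  have hψ : iteratedDeriv 2 ψ ‖x - y‖ = -m * n := by
    have hderiv : deriv ψ = fun s => m * (n / 2) * (4 * ρ - 2 * s) := by
      funext s
      have h := ((hasDerivAt_id s).const_mul (4 * ρ)).sub (hasDerivAt_pow 2 s)
      exact (h.const_mul (m * (n / 2))).deriv.trans (by norm_num)
    rw [iteratedDeriv_succ, iteratedDeriv_one, hderiv]
    simp only [deriv_const_mul_field', deriv_const_sub', deriv_const_mul_id']
    ring
  have hsq (z : E) : ContDiffAt ℝ 2 (fun z : E => ‖z‖ ^ 2) z := (contDiff_norm_sq ℝ).contDiffAt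
  have hlap {F : E → ℝ} {z : E} (hF : ContDiffAt ℝ 2 F z) :
      Δ (fun z => F z + -m * ‖z‖ ^ 2) z = Δ F z - 2 * m * n := by
    rw [laplacian_add_const_mul hF (hsq z), laplacian_norm_sq]
    ring
  have hpen : (fun z : E × E => V z.1 + W z.2 - m * doublingPenalty ρ z.1 z.2) =
      fun z => V z.1 + -m * ‖z.1‖ ^ 2 + (W z.2 + -m * ‖z.2‖ ^ 2) - ψ ‖z.1 - z.2‖ := by
    funext z
    simp only [ψ, doublingPenalty]
    ring
  have hcomb := laplacian_add_laplacian_le_of_isLocalMax_radial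
    (hV.add (contDiffAt_const.mul (hsq x))) (hW.add (contDiffAt_const.mul (hsq y)))
    (by fun_prop) (hpen ▸ hmax) hxy
  rw [hlap hV, hlap hW, hψ] at hcomb
  linarith

theorem exists_isCompact_logBarrier_add_le {ρ : ℝ} (hρ : 0 < ρ) (c : ℝ) :
    ∃ K ⊆ (closedBall (0 : E) ρ \ {0}) ×ˢ (closedBall (0 : E) ρ \ {0}), IsCompact K ∧
      ∀ z ∈ (closedBall (0 : E) ρ \ {0}) ×ˢ (closedBall (0 : E) ρ \ {0}) \ K,
        logBarrier ρ z.1 + logBarrier ρ z.2 ≤ c := by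
  obtain ⟨K, hKD, hK, hKc⟩ := exists_isCompact_logBarrier_le (E := E) hρ c
  refine ⟨K ×ˢ K, Set.prod_mono hKD hKD, hK.prod hK, fun z ⟨⟨hz₁, hz₂⟩, hzK⟩ => ?_⟩
  by_cases h₁ : z.1 ∈ K
  · linarith [logBarrier_nonpos hz₁, hKc z.2 ⟨hz₂, fun h₂ => hzK ⟨h₁, h₂⟩⟩]
  · linarith [logBarrier_nonpos hz₂, hKc z.1 ⟨hz₁, h₁⟩]

theorem SubharmonicOnNhd.not_isMaxOn_add_sub_doublingPenalty (hdim : 3 ≤ Module.finrank ℝ E)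
    {ρ m δ ε : ℝ} {v w : E → ℝ} (hv : SubharmonicOnNhd v (closedBall 0 ρ \ {0}))
    (hw : SubharmonicOnNhd w (closedBall 0 ρ \ {0})) {x y : E}
    (hz : (x, y) ∈ (closedBall 0 ρ \ {0}) ×ˢ (closedBall 0 ρ \ {0})) (hxρ : ‖x‖ < ρ)
    (hyρ : ‖y‖ < ρ) (hxy : x ≠ y) (hε : 0 < ε) :
    ¬ IsMaxOn (fun z : E × E => v z.1 + w z.2 - m * doublingPenalty ρ z.1 z.2 - δ +
      ε * (logBarrier ρ z.1 + logBarrier ρ z.2))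
      ((closedBall 0 ρ \ {0}) ×ˢ (closedBall 0 ρ \ {0})) (x, y) := by
  intro hmax
  obtain ⟨hVC2, hV⟩ := hv.laplacian_add_logBarrier_pos hdim hz.1 hz.1.2 ρ hε
  obtain ⟨hWC2, hW⟩ := hw.laplacian_add_logBarrier_pos hdim hz.2 hz.2.2 ρ hε
  refine not_isLocalMax_sub_doublingPenalty (ρ := ρ) (m := m) hVC2 hWC2 hV hW hxy ?_
  filter_upwards [prod_mem_nhds (closedBall_sdiff_singleton_mem_nhds hz.1.2 hxρ)
    (closedBall_sdiff_singleton_mem_nhds hz.2.2 hyρ)] with q hq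
  have := hmax hq
  simp only [mem_ofPred_eq] at this
  linarith

theorem SubharmonicOnNhd.add_le_doublingPenalty (hdim : 3 ≤ Module.finrank ℝ E) {ρ M δ : ℝ}
    (hρ : 0 < ρ) {v w : E → ℝ} (hv : SubharmonicOnNhd v (closedBall 0 ρ \ {0}))
    (hw : SubharmonicOnNhd w (closedBall 0 ρ \ {0}))
    (hdiag : ∀ x ∈ closedBall 0 ρ \ {0}, v x + w x ≤ δ) (hM : 0 ≤ M)
    (hbdd : ∀ x ∈ closedBall 0 ρ \ {0}, ∀ y ∈ closedBall 0 ρ \ {0}, v x + w y ≤ M + δ) :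
    ∀ x ∈ closedBall 0 ρ \ {0}, ∀ y ∈ closedBall 0 ρ \ {0},
      v x + w y ≤ M / ρ ^ 2 * doublingPenalty ρ x y + δ := by
  set D : Set E := closedBall 0 ρ \ {0}
  have hpen_nonneg : ∀ z ∈ D ×ˢ D, 0 ≤ M / ρ ^ 2 * doublingPenalty ρ z.1 z.2 := fun z hz =>
    mul_nonneg (by positivity) (le_trans (by positivity) (le_doublingPenalty hz.1.1 hz.2.1))
  suffices ∀ z ∈ D ×ˢ D, v z.1 + w z.2 - M / ρ ^ 2 * doublingPenalty ρ z.1 z.2 - δ ≤ 0 from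
    fun x hx y hy => by linarith [this (x, y) ⟨hx, hy⟩]
  refine nonpos_of_penalized_isMaxOn (C := M)
    (Γ := fun z => logBarrier ρ z.1 + logBarrier ρ z.2)
    (((hv.continuousOn.comp continuousOn_fst fun z hz => hz.1).add
      (hw.continuousOn.comp continuousOn_snd fun z hz => hz.2)).sub
      (continuous_doublingPenalty ρ |>.const_mul _).continuousOn |>.sub continuousOn_const)
    (((continuousOn_logBarrier ρ).comp continuousOn_fst fun z hz => hz.1).add
      ((continuousOn_logBarrier ρ).comp continuousOn_snd fun z hz => hz.2))
    (fun z hz => by linarith [hbdd _ hz.1 _ hz.2, hpen_nonneg z hz])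
    (exists_isCompact_logBarrier_add_le hρ) ?_
  rintro ε hε ⟨x, y⟩ hz hmax
  have hΓ : ε * (logBarrier ρ x + logBarrier ρ y) ≤ 0 :=
    mul_nonpos_of_nonneg_of_nonpos hε.le
      (add_nonpos (logBarrier_nonpos hz.1) (logBarrier_nonpos hz.2))
  by_contra! hpos
  have hxy : x ≠ y := by
    rintro rfl
    linarith [hdiag x hz.1, hpen_nonneg _ hz]
  have hinterior : ‖x‖ ≠ ρ ∧ ‖y‖ ≠ ρ := by
    by_contra h
    have := le_mul_doublingPenalty hρ hM hz.1.1 hz.2.1 (by tauto)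
    linarith [hbdd x hz.1 y hz.2]
  have hlt {p : E} (hp : p ∈ D) (hpρ : ‖p‖ ≠ ρ) : ‖p‖ < ρ :=
    (mem_closedBall_zero_iff.mp hp.1).lt_of_ne hpρ
  exact hv.not_isMaxOn_add_sub_doublingPenalty hdim hw hz (hlt hz.1 hinterior.1)
    (hlt hz.2 hinterior.2) hxy hε hmax

end MaximumPrinciple

section RadialPotential

theorem hasDerivAt_integral_of_continuousOn_Ioo {ψ : ℝ → ℝ} {a b r : ℝ}
    (hcont : ContinuousOn ψ (Ioo a b)) (hint : IntegrableOn ψ (Ioo a b)) (hr : r ∈ Ioo a b) :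
    HasDerivAt (fun s => ∫ t in a..s, ψ t) (ψ r) r := by
  refine intervalIntegral.integral_hasDerivAt_right ?_
    (hcont.stronglyMeasurableAtFilter isOpen_Ioo r hr) (hcont.continuousAt (isOpen_Ioo.mem_nhds hr))
  rw [intervalIntegrable_iff_integrableOn_Ioo_of_le hr.1.le]
  exact hint.mono_set (Ioo_subset_Ioo_right hr.2.le)

theorem contDiffOn_one_integral_of_continuousOn_Ioo {ψ : ℝ → ℝ} {a b : ℝ}
    (hcont : ContinuousOn ψ (Ioo a b)) (hint : IntegrableOn ψ (Ioo a b)) :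
    ContDiffOn ℝ 1 (fun s => ∫ t in a..s, ψ t) (Ioo a b) := by
  have hderiv := fun r hr => hasDerivAt_integral_of_continuousOn_Ioo (r := r) hcont hint hr
  rw [show (1 : WithTop ℕ∞) = 0 + 1 from rfl, contDiffOn_succ_iff_deriv_of_isOpen isOpen_Ioo]
  refine ⟨fun r hr => (hderiv r hr).differentiableAt.differentiableWithinAt, by simp, ?_⟩
  exact contDiffOn_zero.mpr (hcont.congr fun r hr => (hderiv r hr).deriv)

/-- The solution of `G'' + 2 / r * G' = -φ` tending to `0` at the origin: the radial potential of
the density `φ` in dimension three. In higher dimensions it still dominates the source, because it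
is decreasing. -/
noncomputable def radialPotential (φ : ℝ → ℝ) (r : ℝ) : ℝ :=
  (∫ t in 0..r, t ^ 2 * φ t) / r - ∫ t in 0..r, t * φ t

variable {φ : ℝ → ℝ} {R : ℝ}

theorem integrableOn_sq_mul (hint : IntegrableOn (fun t => t * φ t) (Ioo 0 R)) :
    IntegrableOn (fun t => t ^ 2 * φ t) (Ioo 0 R) := by
  have h : IntegrableOn (fun t => t * (t * φ t)) (Icc 0 R) :=
    ((integrableOn_Icc_iff_integrableOn_Ioo enorm_ne_top enorm_ne_top).mpr hint).continuousOn_mul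
      continuousOn_id isCompact_Icc
  exact (h.mono_set Ioo_subset_Icc_self).congr_fun (fun t _ => by ring) measurableSet_Ioo

theorem tendsto_integral_mul (hint : IntegrableOn (fun t => t * φ t) (Ioo 0 R)) (hR : 0 < R) :
    Tendsto (fun r => ∫ t in 0..r, t * φ t) (𝓝[>] 0) (𝓝 0) := by
  have hcont := intervalIntegral.continuousOn_primitive_interval'
    ((intervalIntegrable_iff_integrableOn_Ioo_of_le hR.le).mpr hint) left_mem_uIcc
  rw [uIcc_of_le hR.le] at hcont
  have h := (hcont 0 (left_mem_Icc.mpr hR.le)).mono_left (nhdsWithin_mono 0 Ioo_subset_Icc_self)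
  simpa [nhdsWithin_Ioo_eq_nhdsGT hR] using h

theorem integral_sq_mul_nonneg (hnonneg : ∀ r ∈ Ioo 0 R, 0 ≤ φ r) {r : ℝ} (hr : r ∈ Ioo 0 R) :
    0 ≤ ∫ t in 0..r, t ^ 2 * φ t := by
  rw [intervalIntegral.integral_of_le hr.1.le, integral_Ioc_eq_integral_Ioo]
  exact setIntegral_nonneg measurableSet_Ioo fun t ht =>
    mul_nonneg (sq_nonneg t) (hnonneg t ⟨ht.1, ht.2.trans hr.2⟩)

theorem integral_sq_mul_le (hnonneg : ∀ r ∈ Ioo 0 R, 0 ≤ φ r)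
    (hint : IntegrableOn (fun t => t * φ t) (Ioo 0 R)) {r : ℝ} (hr : r ∈ Ioo 0 R) :
    ∫ t in 0..r, t ^ 2 * φ t ≤ r * ∫ t in 0..r, t * φ t := by
  have hsub : Ioo 0 r ⊆ Ioo 0 R := Ioo_subset_Ioo_right hr.2.le
  rw [← intervalIntegral.integral_const_mul]
  simp only [intervalIntegral.integral_of_le hr.1.le, integral_Ioc_eq_integral_Ioo]
  refine setIntegral_mono_on ((integrableOn_sq_mul hint).mono_set hsub)
    ((hint.mono_set hsub).const_mul r) measurableSet_Ioo fun t ht => ?_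
  rw [sq, mul_assoc]
  exact mul_le_mul_of_nonneg_right ht.2.le (mul_nonneg ht.1.le (hnonneg t (hsub ht)))

theorem tendsto_radialPotential (hnonneg : ∀ r ∈ Ioo 0 R, 0 ≤ φ r)
    (hint : IntegrableOn (fun t => t * φ t) (Ioo 0 R)) (hR : 0 < R) :
    Tendsto (radialPotential φ) (𝓝[>] 0) (𝓝 0) := by
  have hS := tendsto_integral_mul hint hR
  suffices Tendsto (fun r => (∫ t in 0..r, t ^ 2 * φ t) / r) (𝓝[>] 0) (𝓝 0) by
    simpa only [radialPotential, sub_zero] using! this.sub hS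
  refine tendsto_of_tendsto_of_tendsto_of_le_of_le' tendsto_const_nhds hS ?_ ?_ <;>
    filter_upwards [Ioo_mem_nhdsGT hR] with r hr
  · exact div_nonneg (integral_sq_mul_nonneg hnonneg hr) hr.1.le
  · exact (div_le_iff₀' hr.1).mpr (integral_sq_mul_le hnonneg hint hr)

theorem hasDerivAt_integral_sq_mul (hcont : ContinuousOn φ (Ioo 0 R))
    (hint : IntegrableOn (fun t => t * φ t) (Ioo 0 R)) {r : ℝ} (hr : r ∈ Ioo 0 R) :
    HasDerivAt (fun s => ∫ t in 0..s, t ^ 2 * φ t) (r ^ 2 * φ r) r :=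
  hasDerivAt_integral_of_continuousOn_Ioo ((continuousOn_pow 2).mul hcont)
    (integrableOn_sq_mul hint) hr

theorem hasDerivAt_radialPotential (hcont : ContinuousOn φ (Ioo 0 R))
    (hint : IntegrableOn (fun t => t * φ t) (Ioo 0 R)) {r : ℝ} (hr : r ∈ Ioo 0 R) :
    HasDerivAt (radialPotential φ) (-(∫ t in 0..r, t ^ 2 * φ t) / r ^ 2) r := by
  have hS : HasDerivAt (fun s => ∫ t in 0..s, t * φ t) (r * φ r) r :=
    hasDerivAt_integral_of_continuousOn_Ioo (continuousOn_id.mul hcont) hint hr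
  have hr0 : r ≠ 0 := hr.1.ne'
  refine (((hasDerivAt_integral_sq_mul hcont hint hr).div (hasDerivAt_id r) hr0).sub
    hS).congr_deriv ?_
  simp only [id_eq]
  field_simp
  ring

theorem contDiffOn_radialPotential (hcont : ContinuousOn φ (Ioo 0 R))
    (hint : IntegrableOn (fun t => t * φ t) (Ioo 0 R)) :
    ContDiffOn ℝ 2 (radialPotential φ) (Ioo 0 R) := by
  have hderiv := fun r hr => hasDerivAt_radialPotential (r := r) hcont hint hr
  rw [show (2 : WithTop ℕ∞) = 1 + 1 from rfl, contDiffOn_succ_iff_deriv_of_isOpen isOpen_Ioo]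
  refine ⟨fun r hr => (hderiv r hr).differentiableAt.differentiableWithinAt, by simp, ?_⟩
  have hP := contDiffOn_one_integral_of_continuousOn_Ioo ((continuousOn_pow 2).mul hcont)
    (integrableOn_sq_mul hint)
  exact (hP.neg.div (contDiffOn_id.pow 2) fun r hr => pow_ne_zero 2 hr.1.ne').congr
    fun r hr => (hderiv r hr).deriv

theorem iteratedDeriv_two_radialPotential (hcont : ContinuousOn φ (Ioo 0 R))
    (hint : IntegrableOn (fun t => t * φ t) (Ioo 0 R)) {r : ℝ} (hr : r ∈ Ioo 0 R) :
    iteratedDeriv 2 (radialPotential φ) r + 2 / r * deriv (radialPotential φ) r = -φ r := by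
  have hderiv : deriv (radialPotential φ) =ᶠ[𝓝 r]
      fun s => -(∫ t in 0..s, t ^ 2 * φ t) / s ^ 2 := by
    filter_upwards [isOpen_Ioo.mem_nhds hr] with s hs
      using (hasDerivAt_radialPotential hcont hint hs).deriv
  have hr0 : r ≠ 0 := hr.1.ne'
  have hderiv₂ : HasDerivAt (fun s => -(∫ t in 0..s, t ^ 2 * φ t) / s ^ 2)
      (-φ r + 2 * (∫ t in 0..r, t ^ 2 * φ t) / r ^ 3) r := by
    refine ((hasDerivAt_integral_sq_mul hcont hint hr).fun_neg.fun_div (hasDerivAt_pow 2 r)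
      (pow_ne_zero 2 hr0)).congr_deriv ?_
    field_simp
    ring
  rw [iteratedDeriv_succ, iteratedDeriv_one, hderiv.deriv_eq, hderiv.eq_of_nhds, hderiv₂.deriv]
  field_simp
  ring

theorem deriv_radialPotential_nonpos (hcont : ContinuousOn φ (Ioo 0 R))
    (hint : IntegrableOn (fun t => t * φ t) (Ioo 0 R)) (hnonneg : ∀ r ∈ Ioo 0 R, 0 ≤ φ r)
    {r : ℝ} (hr : r ∈ Ioo 0 R) : deriv (radialPotential φ) r ≤ 0 := by
  rw [(hasDerivAt_radialPotential hcont hint hr).deriv, neg_div]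
  exact neg_nonpos.mpr (div_nonneg (integral_sq_mul_nonneg hnonneg hr) (sq_nonneg r))

end RadialPotential

section RemovableSingularity
theorem exists_tendsto_of_eventually_sub_lt {α : Type*} {l : Filter α} [l.NeBot] {u : α → ℝ}
    (h : ∀ η > 0, ∀ᶠ p in l ×ˢ l, u p.1 - u p.2 < η) : ∃ L, Tendsto u l (𝓝 L) := by
  rw [← cauchy_map_iff_exists_tendsto, cauchy_map_iff',
    uniformity_basis_dist.tendsto_right_iff]
  intro η hη
  filter_upwards [h η hη, tendsto_prod_swap.eventually (h η hη)] with p h₁ h₂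
  exact abs_sub_lt_iff.mpr ⟨h₁, h₂⟩

variable {E : Type*} [NormedAddCommGroup E] {φ : ℝ → ℝ} {R : ℝ}

theorem tendsto_radialPotential_norm (hnonneg : ∀ r ∈ Ioo 0 R, 0 ≤ φ r)
    (hint : IntegrableOn (fun t => t * φ t) (Ioo 0 R)) (hR : 0 < R) :
    Tendsto (fun x : E => radialPotential φ ‖x‖) (𝓝[≠] 0) (𝓝 0) :=
  (tendsto_radialPotential hnonneg hint hR).comp tendsto_norm_nhdsNE_zero

variable [InnerProductSpace ℝ E]

theorem contDiffAt_radialPotential_norm (hcont : ContinuousOn φ (Ioo 0 R))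
    (hint : IntegrableOn (fun t => t * φ t) (Ioo 0 R)) {x : E} (hx : x ∈ ball 0 R \ {0}) :
    ContDiffAt ℝ 2 (fun y : E => radialPotential φ ‖y‖) x := by
  have hr : ‖x‖ ∈ Ioo 0 R := ⟨norm_pos_iff.mpr hx.2, by simpa using hx.1⟩
  exact ((contDiffOn_radialPotential hcont hint).contDiffAt (isOpen_Ioo.mem_nhds hr)).comp x
    (contDiffAt_norm ℝ hx.2)

variable [FiniteDimensional ℝ E]

theorem laplacian_radialPotential_norm_le (hdim : 3 ≤ Module.finrank ℝ E)
    (hcont : ContinuousOn φ (Ioo 0 R)) (hnonneg : ∀ r ∈ Ioo 0 R, 0 ≤ φ r)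
    (hint : IntegrableOn (fun t => t * φ t) (Ioo 0 R)) {x : E} (hx : x ∈ ball 0 R \ {0}) :
    Δ (fun y : E => radialPotential φ ‖y‖) x ≤ -φ ‖x‖ := by
  have hr : ‖x‖ ∈ Ioo 0 R := ⟨norm_pos_iff.mpr hx.2, by simpa using hx.1⟩
  have hdim' : (3 : ℝ) ≤ Module.finrank ℝ E := by exact_mod_cast hdim
  have hcoeff : 2 / ‖x‖ ≤ ((Module.finrank ℝ E : ℝ) - 1) / ‖x‖ := by
    gcongr
    linarith
  rw [laplacian_comp_norm hx.2
      ((contDiffOn_radialPotential hcont hint).contDiffAt (isOpen_Ioo.mem_nhds hr)),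
    ← iteratedDeriv_two_radialPotential hcont hint hr]
  exact add_le_add_right (mul_le_mul_of_nonpos_right hcoeff
    (deriv_radialPotential_nonpos hcont hint hnonneg hr)) _

theorem subharmonicOnNhd_neg {u : E → ℝ} {s : Set E} (hu : ∀ x ∈ s, ContDiffAt ℝ 2 u x)
    (hΔ : ∀ x ∈ s, Δ u x ≤ 0) : SubharmonicOnNhd (fun x => -u x) s := by
  refine fun x hx => ⟨(hu x hx).neg, ?_⟩
  have hneg : Δ (fun x => -u x) x = -Δ u x := by
    simpa using laplacian_add_const_mul (u := fun _ => (0 : ℝ)) contDiffAt_const (hu x hx) (-1)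
  rw [hneg]
  exact neg_nonneg.mpr (hΔ x hx)

theorem subharmonicOnNhd_sub {u g : E → ℝ} {s : Set E} (hu : ∀ x ∈ s, ContDiffAt ℝ 2 u x)
    (hg : ∀ x ∈ s, ContDiffAt ℝ 2 g x) (hΔ : ∀ x ∈ s, Δ g x ≤ Δ u x) :
    SubharmonicOnNhd (fun x => u x - g x) s := by
  refine fun x hx => ⟨(hu x hx).sub (hg x hx), ?_⟩
  have hsub : Δ (fun x => u x - g x) x = Δ u x - Δ g x := by
    simpa [← sub_eq_add_neg] using laplacian_add_const_mul (hu x hx) (hg x hx) (-1)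
  rw [hsub]
  exact sub_nonneg.mpr (hΔ x hx)

theorem SubharmonicOnNhd.sub_le_doublingPenalty (hdim : 3 ≤ Module.finrank ℝ E) {ρ C δ : ℝ}
    (hρ : 0 < ρ) {u g : E → ℝ} (hC : ∀ x ∈ closedBall 0 ρ \ {0}, |u x| ≤ C)
    (hneg : SubharmonicOnNhd (fun x => -u x) (closedBall 0 ρ \ {0}))
    (hsub : SubharmonicOnNhd (fun x => u x - g x) (closedBall 0 ρ \ {0}))
    (hg : ∀ x ∈ closedBall 0 ρ \ {0}, |g x| ≤ δ) :
    ∀ x ∈ closedBall 0 ρ \ {0}, ∀ y ∈ closedBall 0 ρ \ {0},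
      u x - u y ≤ 2 * C / ρ ^ 2 * doublingPenalty ρ x y + 2 * δ := by
  intro x hx y hy
  have hC₀ : 0 ≤ C := (abs_nonneg _).trans (hC x hx)
  have := hsub.add_le_doublingPenalty hdim hρ hneg (δ := δ) (M := 2 * C)
    (fun z hz => by linarith [neg_le_of_abs_le (hg z hz)]) (by positivity)
    (fun z hz z' hz' => by
      linarith [neg_le_of_abs_le (hg z hz), le_of_abs_le (hC z hz), neg_le_of_abs_le (hC z' hz')])
    x hx y hy
  linarith [le_of_abs_le (hg x hx)]

theorem exists_tendsto_of_neg_le_laplacian (hdim : 3 ≤ Module.finrank ℝ E) (hR : 0 < R)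
    (hcont : ContinuousOn φ (Ioo 0 R)) (hnonneg : ∀ r ∈ Ioo 0 R, 0 ≤ φ r)
    (hint : IntegrableOn (fun t => t * φ t) (Ioo 0 R)) {u : E → ℝ} {C : ℝ}
    (hu : ∀ x ∈ ball 0 R \ {0}, ContDiffAt ℝ 2 u x) (hC : ∀ x ∈ ball 0 R \ {0}, |u x| ≤ C)
    (hΔ : ∀ x ∈ ball 0 R \ {0}, -φ ‖x‖ ≤ Δ u x ∧ Δ u x ≤ 0) :
    ∃ L, Tendsto u (𝓝[≠] 0) (𝓝 L) := by
  have : Nontrivial E := Module.nontrivial_of_finrank_pos (R := ℝ) (by lia)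
  refine exists_tendsto_of_eventually_sub_lt fun η hη => ?_
  have hsmall : ∀ᶠ x : E in 𝓝[≠] 0, x ∈ ball 0 R \ {0} ∧ |radialPotential φ ‖x‖| ≤ η / 4 := by
    filter_upwards [sdiff_mem_nhdsWithin_compl (ball_mem_nhds 0 hR) {0},
      (tendsto_radialPotential_norm hnonneg hint hR).abs.eventually_le_const
        (show |(0 : ℝ)| < η / 4 by simpa using hη)] with x hxR hx
    exact ⟨hxR, hx⟩
  obtain ⟨ρ, hρ, hρsmall⟩ :=
    (nhdsWithin_hasBasis nhds_basis_closedBall _).eventually_iff.mp hsmall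
  have hρR : closedBall (0 : E) ρ \ {0} ⊆ ball 0 R \ {0} := fun x hx => (hρsmall hx).1
  have hne : closedBall (0 : E) ρ \ {0} ∈ 𝓝[≠] 0 :=
    sdiff_mem_nhdsWithin_compl (closedBall_mem_nhds 0 hρ) _
  have hpen : ∀ᶠ z : E × E in (𝓝[≠] 0) ×ˢ (𝓝[≠] 0),
      2 * C / ρ ^ 2 * doublingPenalty ρ z.1 z.2 < η / 2 :=
    ((tendsto_doublingPenalty ρ).const_mul _).eventually_lt_const (by simpa using hη)
  filter_upwards [hpen, prod_mem_prod hne hne] with z hz hzD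
  have := SubharmonicOnNhd.sub_le_doublingPenalty hdim hρ (fun x hx => hC x (hρR hx))
    (subharmonicOnNhd_neg (fun x hx => hu x (hρR hx)) fun x hx => (hΔ x (hρR hx)).2)
    (subharmonicOnNhd_sub (fun x hx => hu x (hρR hx))
      (fun x hx => contDiffAt_radialPotential_norm hcont hint (hρR hx)) fun x hx =>
        (laplacian_radialPotential_norm_le hdim hcont hnonneg hint (hρR hx)).trans
          (hΔ x (hρR hx)).1)
    (fun x hx => (hρsmall hx).2) z.1 hzD.1 z.2 hzD.2
  linarith

end RemovableSingularity

section PositiveSolution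
variable {E : Type*} [NormedAddCommGroup E] [InnerProductSpace ℝ E] [FiniteDimensional ℝ E]

theorem exists_pos_forall_le (hdim : 3 ≤ Module.finrank ℝ E) {ρ : ℝ} (hρ : 0 < ρ) {u : E → ℝ}
    (hneg : SubharmonicOnNhd (fun x => -u x) (closedBall 0 ρ \ {0}))
    (hpos : ∀ x ∈ closedBall 0 ρ \ {0}, 0 < u x) :
    ∃ c, 0 < c ∧ ∀ x ∈ closedBall 0 ρ \ {0}, c ≤ u x := by
  have : Nontrivial E := Module.nontrivial_of_finrank_pos (R := ℝ) (by lia)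
  have hsphere : sphere (0 : E) ρ ⊆ closedBall 0 ρ \ {0} := fun x hx =>
    ⟨sphere_subset_closedBall hx, ne_of_mem_sphere hx hρ.ne'⟩
  obtain ⟨x₀, hx₀, hmin⟩ := (isCompact_sphere (0 : E) ρ).exists_isMaxOn
    (NormedSpace.sphere_nonempty.mpr hρ.le) (hneg.continuousOn.mono hsphere)
  refine ⟨u x₀, hpos x₀ (hsphere hx₀), fun x hx => neg_le_neg_iff.mp ?_⟩
  exact hneg.le_of_le_on_sphere hdim hρ (fun y hy => (neg_neg_of_pos (hpos y hy)).le) hmin x hx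

theorem statement_10_general (hdim : 3 ≤ Module.finrank ℝ E) {φ f : ℝ → ℝ} {r₁ : ℝ}
    (hφcont : ContinuousOn φ (Ioo 0 1)) (hφnonneg : ∀ r ∈ Ioo 0 1, 0 ≤ φ r)
    (hφint : IntegrableOn (fun r => r * φ r) (Ioo 0 1))
    (hf : ∀ a > 0, ∀ b, BddAbove (f '' Icc a b)) (hr₁ : 0 < r₁) {u : E → ℝ}
    (hu : ContDiffOn ℝ 2 u (ball 0 r₁ \ {0})) (hbdd : ∃ M, ∀ x ∈ ball 0 r₁ \ {0}, u x ≤ M)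
    (hsol : ∀ x ∈ ball 0 r₁ \ {0}, 0 < u x ∧ 0 ≤ -Δ u x ∧ -Δ u x ≤ φ ‖x‖ * f (u x)) :
    ∃ L, 0 < L ∧ Tendsto u (𝓝[≠] 0) (𝓝 L) := by
  have : Nontrivial E := Module.nontrivial_of_finrank_pos (R := ℝ) (by lia)
  obtain ⟨M, hM⟩ := hbdd
  obtain ⟨ρ, hρ, hρ_min⟩ := exists_between (lt_min hr₁ zero_lt_one)
  obtain ⟨hρr₁, hρ1⟩ := lt_min_iff.mp hρ_min
  have hclosed : closedBall (0 : E) ρ \ {0} ⊆ ball 0 r₁ \ {0} :=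
    sdiff_subset_sdiff_left (closedBall_subset_ball hρr₁)
  have hball : ball (0 : E) ρ \ {0} ⊆ closedBall 0 ρ \ {0} :=
    sdiff_subset_sdiff_left ball_subset_closedBall
  have hC2 : ∀ x ∈ closedBall 0 ρ \ {0}, ContDiffAt ℝ 2 u x := fun x hx =>
    hu.contDiffAt ((isOpen_ball.sdiff isClosed_singleton).mem_nhds (hclosed hx))
  have hsuper : ∀ x ∈ closedBall 0 ρ \ {0}, Δ u x ≤ 0 := fun x hx =>
    neg_nonneg.mp (hsol x (hclosed hx)).2.1
  obtain ⟨c, hc, hcu⟩ := exists_pos_forall_le hdim hρ (subharmonicOnNhd_neg hC2 hsuper)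
    fun x hx => (hsol x (hclosed hx)).1
  obtain ⟨K, hK, hfK⟩ := (hf c hc M).exists_ge 0
  have hsub : Ioo 0 ρ ⊆ Ioo (0 : ℝ) 1 := Ioo_subset_Ioo_right hρ1.le
  have hsource : ∀ x ∈ ball 0 ρ \ {0}, -(K * φ ‖x‖) ≤ Δ u x := fun x hx => by
    have hr : ‖x‖ ∈ Ioo 0 ρ := ⟨norm_pos_iff.mpr hx.2, by simpa using hx.1⟩
    have hfu : f (u x) ≤ K :=
      hfK _ (mem_image_of_mem f ⟨hcu x (hball hx), hM x (hclosed (hball hx))⟩)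
    linarith [(hsol x (hclosed (hball hx))).2.2,
      mul_le_mul_of_nonneg_left hfu (hφnonneg _ (hsub hr))]
  obtain ⟨L, hL⟩ := exists_tendsto_of_neg_le_laplacian (φ := fun r => K * φ r) (C := M) hdim hρ
    ((hφcont.mono hsub).const_mul K) (fun r hr => mul_nonneg hK (hφnonneg r (hsub hr)))
    (by simpa only [IntegrableOn, mul_left_comm] using (hφint.mono_set hsub).const_mul K)
    (fun x hx => hC2 x (hball hx))
    (fun x hx => by
      rw [abs_of_pos (hsol x (hclosed (hball hx))).1]
      exact hM x (hclosed (hball hx)))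
    fun x hx => ⟨hsource x hx, hsuper x (hball hx)⟩
  refine ⟨L, hc.trans_le (ge_of_tendsto hL ?_), hL⟩
  filter_upwards [sdiff_mem_nhdsWithin_compl (closedBall_mem_nhds 0 hρ) _] with x hx
    using hcu x hx

end PositiveSolution

theorem laplacian_eq_innerProductSpace_laplacian {N : ℕ} (u : EuclideanSpace ℝ (Fin N) → ℝ) :
    laplacian u = Δ u := by
  funext x
  rw [InnerProductSpace.laplacian_eq_iteratedFDeriv_orthonormalBasis u
    (EuclideanSpace.basisFun (Fin N) ℝ)]
  simp [laplacian]

/-- Lemma 3.8: a bounded positive solution in a punctured ball has a positive limit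
at the puncture. -/
theorem statement_10 {N : ℕ} (hN : 3 ≤ N) (φ f : ℝ → ℝ)
    (hφcont : ContinuousOn φ (Ioi (0:ℝ))) (hφnonneg : ∀ r : ℝ, 0 < r → 0 ≤ φ r)
    (hfcont : ContinuousOn f (Ioi (0:ℝ))) (hfnonneg : ∀ t : ℝ, 0 < t → 0 ≤ f t)
    (hφint : IntegrableOn (fun r : ℝ => r * φ r) (Ioo (0:ℝ) 1) volume)
    (r₁ : ℝ) (hr₁ : 0 < r₁) (u : EuclideanSpace ℝ (Fin N) → ℝ)
    (hu : ContDiffOn ℝ 2 u (ball (0:EuclideanSpace ℝ (Fin N)) r₁ \ {0}))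
    (hbdd : ∃ M : ℝ, ∀ x ∈ ball (0:EuclideanSpace ℝ (Fin N)) r₁ \ {0}, u x ≤ M)
    (hsol : ∀ x ∈ ball (0:EuclideanSpace ℝ (Fin N)) r₁ \ {0},
      0 < u x ∧ -laplacian u x = φ ‖x‖ * f (u x)) :
    ∃ L : ℝ, 0 < L ∧ Tendsto u (nhdsWithin (0:EuclideanSpace ℝ (Fin N)) {0}ᶜ) (nhds L) := by
  refine statement_10_general (by simpa using hN) (hφcont.mono Ioo_subset_Ioi_self)
    (fun r hr => hφnonneg r hr.1) hφint
    (fun a ha b => isCompact_Icc.bddAbove_image (hfcont.mono fun t ht => ha.trans_le ht.1))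
    hr₁ hu hbdd fun x hx => ?_
  obtain ⟨hpos, heq⟩ := hsol x hx
  rw [laplacian_eq_innerProductSpace_laplacian] at heq
  have hnonneg := mul_nonneg (hφnonneg _ (norm_pos_iff.mpr hx.2)) (hfnonneg _ hpos)
  exact ⟨hpos, heq ▸ hnonneg, heq.le⟩
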